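/- (Laplace principle / vanishing viscosity limit) For every x ∈ ℝⁿ and t > 0, lim_{ε→0⁺} −ε ln( (2πtε)^{−n/2} ∫_{ℝⁿ} exp(−(‖x−y‖²/(2t) + J(y))/ε) dy ) = inf_{y ∈ ℝⁿ} { ‖x−y‖²/(2t) + J(y) }; that is, S_ε(x,t) → S₀(x,t) as ε → 0⁺. -/

import Mathlib

open scoped Topology
open Filter MeasureTheory

/-- The integrand `exp(−(‖x−y‖²/(2t) + J(y))/ε)`, with the convention `exp(−∞) = 0`. -/
noncomputable def heatIntegrand (n : ℕ) (J : EuclideanSpace ℝ (Fin n) → EReal)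
    (x : EuclideanSpace ℝ (Fin n)) (t ε : ℝ) (y : EuclideanSpace ℝ (Fin n)) : ℝ :=
  if J y = ⊤ then 0 else Real.exp (-((‖x - y‖ ^ 2 / (2 * t) + (J y).toReal) / ε))

/-- `S_ε(x,t) = −ε ln( (2πtε)^{−n/2} ∫ exp(−(‖x−y‖²/(2t) + J(y))/ε) dy )`. -/
noncomputable def viscSol (n : ℕ) (J : EuclideanSpace ℝ (Fin n) → EReal)
    (x : EuclideanSpace ℝ (Fin n)) (t ε : ℝ) : ℝ :=
  -ε * Real.log ((2 * Real.pi * t * ε) ^ (-(n : ℝ) / 2) * ∫ y, heatIntegrand n J x t ε y)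

/-- Gaussian integral centred at `x`. -/
lemma gauss_aux (n : ℕ) (x : EuclideanSpace ℝ (Fin n)) (b : ℝ) (hb : 0 < b) :
    Integrable (fun y : EuclideanSpace ℝ (Fin n) => Real.exp (-b * ‖x - y‖ ^ 2)) ∧
    ∫ y : EuclideanSpace ℝ (Fin n), Real.exp (-b * ‖x - y‖ ^ 2) = (Real.pi / b) ^ ((n : ℝ) / 2) := by
  have h : ∫ y : EuclideanSpace ℝ (Fin n), Real.exp (-b * ‖x - y‖ ^ 2)
      = (Real.pi / b) ^ ((n : ℝ) / 2) := by
    rw [integral_sub_left_eq_self (fun v : EuclideanSpace ℝ (Fin n) => Real.exp (-b * ‖v‖ ^ 2))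
      volume x]
    rw [GaussianFourier.integral_rexp_neg_mul_sq_norm hb]
    simp
  refine ⟨?_, h⟩
  by_contra hc
  rw [integral_undef hc] at h
  have : 0 < (Real.pi / b) ^ ((n : ℝ) / 2) := by have := Real.pi_pos; positivity
  linarith

lemma heat_nonneg (n : ℕ) (J : EuclideanSpace ℝ (Fin n) → EReal)
    (x : EuclideanSpace ℝ (Fin n)) (t ε : ℝ) (y : EuclideanSpace ℝ (Fin n)) :
    0 ≤ heatIntegrand n J x t ε y := by
  unfold heatIntegrand
  split_ifs
  · exact le_rfl
  · exact (Real.exp_pos _).le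

lemma heat_measurable (n : ℕ) (J : EuclideanSpace ℝ (Fin n) → EReal)
    (hJ_lsc : LowerSemicontinuous J)
    (x : EuclideanSpace ℝ (Fin n)) (t ε : ℝ) : Measurable (heatIntegrand n J x t ε) := by
  have hJ : Measurable J := hJ_lsc.measurable
  unfold heatIntegrand
  refine Measurable.ite (hJ (measurableSet_singleton _)) measurable_const ?_
  have := hJ.ereal_toReal
  fun_prop

/-- Pointwise upper bound with a parameter `θ`. -/
lemma heat_le (n : ℕ) (J : EuclideanSpace ℝ (Fin n) → EReal)
    (hj : ∀ y, 0 ≤ (J y).toReal)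
    (x : EuclideanSpace ℝ (Fin n)) (t ε m θ : ℝ) (hε : 0 < ε) (hθ : 0 ≤ θ)
    (hθ1 : θ ≤ 1)
    (hm : ∀ y, J y ≠ ⊤ → m ≤ ‖x - y‖ ^ 2 / (2 * t) + (J y).toReal)
    (y : EuclideanSpace ℝ (Fin n)) :
    heatIntegrand n J x t ε y ≤
      Real.exp (-((1 - θ) * m / ε)) * Real.exp (-(θ / (2 * t * ε)) * ‖x - y‖ ^ 2) := by
  unfold heatIntegrand
  split_ifs with h
  · positivity
  · rw [← Real.exp_add, Real.exp_le_exp]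
    have e : -((1 - θ) * m / ε) + -(θ / (2 * t * ε)) * ‖x - y‖ ^ 2
        = -(((1 - θ) * m + θ * (‖x - y‖ ^ 2 / (2 * t))) / ε) := by
      field_simp
      ring
    rw [e]
    refine neg_le_neg (div_le_div_of_nonneg_right ?_ hε.le)
    nlinarith [hm y h, mul_nonneg hθ (hj y), mul_le_mul_of_nonneg_left (hm y h) (sub_nonneg.2 hθ1)]

lemma heat_integrable (n : ℕ) (J : EuclideanSpace ℝ (Fin n) → EReal)
    (hJ_lsc : LowerSemicontinuous J) (hj : ∀ y, 0 ≤ (J y).toReal)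
    (x : EuclideanSpace ℝ (Fin n)) (t ε : ℝ) (ht : 0 < t) (hε : 0 < ε) :
    Integrable (heatIntegrand n J x t ε) := by
  have hg := ((gauss_aux n x (1 / (2 * t * ε)) (by positivity)).1).const_mul
    (Real.exp (-((1 - 1) * 0 / ε)))
  refine hg.mono' (heat_measurable n J hJ_lsc x t ε).aestronglyMeasurable (ae_of_all _ fun y => ?_)
  rw [Real.norm_of_nonneg (heat_nonneg n J x t ε y)]
  exact heat_le n J hj x t ε 0 1 hε zero_le_one le_rfl
    (fun y _ => add_nonneg (by positivity) (hj y)) y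

/-- A sublevel set above the infimum has positive measure. -/
lemma sublevel_pos (n : ℕ) (D : Set (EuclideanSpace ℝ (Fin n)))
    (F : EuclideanSpace ℝ (Fin n) → ℝ) (hF : ConvexOn ℝ D F) (hD : (interior D).Nonempty)
    (y₁ : EuclideanSpace ℝ (Fin n)) (hy₁ : y₁ ∈ D) (c : ℝ) (hc : F y₁ < c) :
    volume {y | y ∈ D ∧ F y ≤ c} ≠ 0 := by
  have hpos : volume D ≠ 0 := by
    have h1 := isOpen_interior.measure_pos volume hD
    exact (h1.trans_le (measure_mono interior_subset)).ne'
  have hk : ∃ k : ℕ, volume {y | y ∈ D ∧ F y ≤ k} ≠ 0 := by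
    by_contra! hk
    apply hpos
    refine measure_mono_null ?_ (measure_iUnion_null hk)
    intro y hy
    obtain ⟨k, hk⟩ := exists_nat_ge (F y)
    exact Set.mem_iUnion.2 ⟨k, hy, hk⟩
  obtain ⟨k, hk⟩ := hk
  obtain ⟨s, hs0, hs1, hs⟩ : ∃ s : ℝ, 0 < s ∧ s ≤ 1 ∧ (1 - s) * F y₁ + s * k ≤ c := by
    have hcont : Tendsto (fun s : ℝ => (1 - s) * F y₁ + s * k) (𝓝[>] 0) (𝓝 (F y₁)) := by
      have : Continuous (fun s : ℝ => (1 - s) * F y₁ + s * k) := by fun_prop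
      have h2 := this.tendsto 0
      simp only [sub_zero, one_mul, zero_mul, add_zero] at h2
      exact h2.mono_left nhdsWithin_le_nhds
    have h3 := hcont.eventually_lt_const hc
    have h4 : ∀ᶠ s : ℝ in 𝓝[>] 0, s ∈ Set.Ioc (0 : ℝ) 1 := Ioc_mem_nhdsGT one_pos
    obtain ⟨s, hs, hs'⟩ := (h3.and h4).exists
    exact ⟨s, hs'.1, hs'.2, hs.le⟩
  intro h0
  have hsub : AffineMap.homothety y₁ s '' {y | y ∈ D ∧ F y ≤ k} ⊆ {y | y ∈ D ∧ F y ≤ c} := by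
    rintro _ ⟨y, ⟨hy, hyk⟩, rfl⟩
    have e : AffineMap.homothety y₁ s y = (1 - s) • y₁ + s • y := by
      simp only [AffineMap.homothety_apply, vsub_eq_sub, vadd_eq_add]
      module
    rw [e]
    refine ⟨hF.1 hy₁ hy (by linarith) hs0.le (by ring), ?_⟩
    refine (hF.2 hy₁ hy (by linarith) hs0.le (by ring)).trans ?_
    simp only [smul_eq_mul]
    nlinarith
  have h5 := measure_mono_null hsub h0
  rw [Measure.addHaar_image_homothety] at h5
  rcases mul_eq_zero.1 h5 with h6 | h6
  · have : 0 < |s ^ Module.finrank ℝ (EuclideanSpace ℝ (Fin n))| := by positivity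
    rw [ENNReal.ofReal_eq_zero] at h6
    linarith
  · exact hk h6

/-- The real-valued statement. -/
lemma visc_real (n : ℕ) (J : EuclideanSpace ℝ (Fin n) → EReal)
    (hJ_lsc : LowerSemicontinuous J) (hj : ∀ y, 0 ≤ (J y).toReal)
    (hJ_int : (interior {y : EuclideanSpace ℝ (Fin n) | J y ≠ ⊤}).Nonempty)
    (x : EuclideanSpace ℝ (Fin n)) (t m : ℝ) (ht : 0 < t)
    (hF : ConvexOn ℝ {y | J y ≠ ⊤} (fun y => ‖x - y‖ ^ 2 / (2 * t) + (J y).toReal))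
    (hm : ∀ y, J y ≠ ⊤ → m ≤ ‖x - y‖ ^ 2 / (2 * t) + (J y).toReal)
    (hm' : ∀ c, m < c → ∃ y, J y ≠ ⊤ ∧ ‖x - y‖ ^ 2 / (2 * t) + (J y).toReal < c) :
    Tendsto (fun ε : ℝ => viscSol n J x t ε) (𝓝[>] (0 : ℝ)) (𝓝 m) := by
  have hpi := Real.pi_pos
  have hε0 : ∀ᶠ ε : ℝ in 𝓝[>] 0, 0 < ε := self_mem_nhdsWithin
  have hε1 : ∀ᶠ ε : ℝ in 𝓝[>] 0, ε ≤ 1 :=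
    Filter.mem_of_superset (Ioc_mem_nhdsGT (one_pos : (0 : ℝ) < 1)) fun s hs => hs.2
  -- a sublevel set
  have key : ∀ c, m < c → ∃ v : ℝ, 0 < v ∧ ∀ ε, 0 < ε →
      Real.exp (-(c / ε)) * v ≤ ∫ y, heatIntegrand n J x t ε y := by
    intro c hc
    obtain ⟨y₁, hy₁, hy₁c⟩ := hm' c hc
    have hv := sublevel_pos n _ _ hF hJ_int y₁ hy₁ c hy₁c
    set E := {y | y ∈ {y | J y ≠ ⊤} ∧ ‖x - y‖ ^ 2 / (2 * t) + (J y).toReal ≤ c} with hE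
    have hset : ∀ ε, 0 < ε → {y | Real.exp (-(c / ε)) ≤ heatIntegrand n J x t ε y} = E := by
      intro ε hε
      ext y
      simp only [hE, Set.mem_ofPred_eq, heatIntegrand]
      split_ifs with h
      · simp [h, Real.exp_pos]
      · simp [h, div_le_div_iff_of_pos_right hε]
    have hfin : volume E < ⊤ := by
      rw [← hset 1 one_pos]
      exact (heat_integrable n J hJ_lsc hj x t 1 ht one_pos).measure_ge_lt_top (Real.exp_pos _)
    refine ⟨volume.real E, ENNReal.toReal_pos hv hfin.ne, fun ε hε => ?_⟩
    rw [← hset ε hε]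
    exact mul_meas_ge_le_integral_of_nonneg (ae_of_all _ (heat_nonneg n J x t ε))
      (heat_integrable n J hJ_lsc hj x t ε ht hε) _
  have hIpos : ∀ ε, 0 < ε → 0 < ∫ y, heatIntegrand n J x t ε y := by
    intro ε hε
    obtain ⟨v, hv, h⟩ := key (m + 1) (by linarith)
    exact lt_of_lt_of_le (by positivity) (h ε hε)
  have hS : ∀ ε, 0 < ε → viscSol n J x t ε =
      (n / 2) * (ε * Real.log (2 * Real.pi * t)) + (n / 2) * (ε * Real.log ε)
        - ε * Real.log (∫ y, heatIntegrand n J x t ε y) := by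
    intro ε hε
    unfold viscSol
    rw [Real.log_mul (by positivity) (hIpos ε hε).ne', Real.log_rpow (by positivity),
      Real.log_mul (by positivity) hε.ne']
    ring
  have hlog : Tendsto (fun ε : ℝ => ε * Real.log ε) (𝓝[>] 0) (𝓝 0) := by
    have := Real.continuous_mul_log.tendsto 0
    simp only [zero_mul] at this
    exact this.mono_left nhdsWithin_le_nhds
  have hid : Tendsto (fun ε : ℝ => ε) (𝓝[>] 0) (𝓝 0) := nhdsWithin_le_nhds
  rw [tendsto_order]
  constructor
  · intro a ha
    have hlim : Tendsto (fun ε : ℝ => (1 - ε) * m + (n / 2) * (ε * Real.log ε)) (𝓝[>] 0)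
        (𝓝 ((1 - 0) * m + (n / 2) * 0)) :=
      ((hid.const_sub 1).mul_const m).add (hlog.const_mul _)
    have hl := hlim.eventually_const_lt (show a < (1 - 0) * m + (n / 2) * 0 by linarith)
    filter_upwards [hl, hε0, hε1] with ε h1 hε hε1
    refine h1.trans_le ?_
    rw [hS ε hε]
    have hg := gauss_aux n x (ε / (2 * t * ε)) (by positivity)
    have hI : ∫ y, heatIntegrand n J x t ε y ≤
        Real.exp (-((1 - ε) * m / ε)) * (Real.pi / (ε / (2 * t * ε))) ^ ((n : ℝ) / 2) := by
      rw [← hg.2, ← integral_const_mul]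
      exact integral_mono (heat_integrable n J hJ_lsc hj x t ε ht hε) (hg.1.const_mul _)
        (heat_le n J hj x t ε m ε hε hε.le hε1 hm)
    have hL := Real.log_le_log (hIpos ε hε) hI
    have e : Real.pi / (ε / (2 * t * ε)) = 2 * Real.pi * t := by field_simp
    rw [e, Real.log_mul (by positivity) (by positivity), Real.log_exp,
      Real.log_rpow (by positivity)] at hL
    have := mul_le_mul_of_nonneg_left hL hε.le
    have e2 : ε * (-((1 - ε) * m / ε) + n / 2 * Real.log (2 * Real.pi * t))
      = -((1 - ε) * m) + n / 2 * (ε * Real.log (2 * Real.pi * t)) := by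
      field_simp
    linarith
  · intro a ha
    obtain ⟨c, hmc, hca⟩ := exists_between ha
    obtain ⟨v, hv, hI⟩ := key c hmc
    have hlim : Tendsto (fun ε : ℝ => (n / 2) * (ε * Real.log (2 * Real.pi * t)) +
        (n / 2) * (ε * Real.log ε) + c - ε * Real.log v) (𝓝[>] 0)
        (𝓝 ((n / 2) * (0 * Real.log (2 * Real.pi * t)) + (n / 2) * 0 + c - 0 * Real.log v)) :=
      ((((hid.mul_const _).const_mul _).add (hlog.const_mul _)).add_const c).sub (hid.mul_const _)
    have hl := hlim.eventually_lt_const (show _ < a by simpa using hca)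
    filter_upwards [hl, hε0] with ε h1 hε
    refine lt_of_le_of_lt ?_ h1
    rw [hS ε hε]
    have hL := Real.log_le_log (by positivity) (hI ε hε)
    rw [Real.log_mul (by positivity) (by positivity), Real.log_exp] at hL
    have := mul_le_mul_of_nonneg_left hL hε.le
    have e2 : ε * (-(c / ε) + Real.log v) = -c + ε * Real.log v := by field_simp
    linarith

/-- **Laplace principle / vanishing viscosity limit.** For every `x ∈ ℝⁿ` and `t > 0`,
`S_ε(x,t) → S₀(x,t) = inf_y { ‖x−y‖²/(2t) + J(y) }` as `ε → 0⁺`. -/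
theorem viscSol_tendsto_moreau_envelope (n : ℕ) (hn : 1 ≤ n)
    (J : EuclideanSpace ℝ (Fin n) → EReal)
    (hJ_proper_bot : ∀ y, J y ≠ ⊥)
    (hJ_lsc : LowerSemicontinuous J)
    (hJ_convex : ∀ y₁ y₂ : EuclideanSpace ℝ (Fin n), ∀ a b : ℝ, 0 ≤ a → 0 ≤ b → a + b = 1 →
      J (a • y₁ + b • y₂) ≤ (a : EReal) * J y₁ + (b : EReal) * J y₂)
    (hJ_int : (interior {y : EuclideanSpace ℝ (Fin n) | J y ≠ ⊤}).Nonempty)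
    (hJ_inf : (⨅ y : EuclideanSpace ℝ (Fin n), J y) = (0 : EReal))
    (x : EuclideanSpace ℝ (Fin n)) (t : ℝ) (ht : 0 < t) :
    Tendsto (fun ε : ℝ => ((viscSol n J x t ε : ℝ) : EReal)) (𝓝[>] (0 : ℝ))
      (𝓝 (⨅ y : EuclideanSpace ℝ (Fin n),
        (((‖x - y‖ ^ 2 / (2 * t) : ℝ)) : EReal) + J y)) := by
  have hJ0 : ∀ y, (0 : EReal) ≤ J y := fun y => hJ_inf ▸ iInf_le J y
  have hj : ∀ y, 0 ≤ (J y).toReal := fun y => EReal.toReal_nonneg (hJ0 y)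
  have hco : ∀ y, J y ≠ ⊤ → J y = ((J y).toReal : EReal) := fun y hy =>
    (EReal.coe_toReal hy (hJ_proper_bot y)).symm
  have hcv : ∀ y₁ y₂ : EuclideanSpace ℝ (Fin n), J y₁ ≠ ⊤ → J y₂ ≠ ⊤ → ∀ a b : ℝ, 0 ≤ a →
      0 ≤ b → a + b = 1 → J (a • y₁ + b • y₂) ≠ ⊤ ∧
      (J (a • y₁ + b • y₂)).toReal ≤ a * (J y₁).toReal + b * (J y₂).toReal := by
    intro y₁ y₂ h1 h2 a b ha hb hab
    have h := hJ_convex y₁ y₂ a b ha hb hab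
    rw [hco y₁ h1, hco y₂ h2, ← EReal.coe_mul, ← EReal.coe_mul, ← EReal.coe_add] at h
    have hne : J (a • y₁ + b • y₂) ≠ ⊤ := fun hh => by
      rw [hh] at h
      exact absurd h (not_le.2 (EReal.coe_lt_top _))
    refine ⟨hne, ?_⟩
    rw [hco _ hne] at h
    exact EReal.coe_le_coe_iff.1 h
  have hF : ConvexOn ℝ {y | J y ≠ ⊤} (fun y => ‖x - y‖ ^ 2 / (2 * t) + (J y).toReal) := by
    refine ⟨fun y₁ h1 y₂ h2 a b ha hb hab => (hcv y₁ y₂ h1 h2 a b ha hb hab).1, ?_⟩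
    intro y₁ h1 y₂ h2 a b ha hb hab
    have hJc := (hcv y₁ y₂ h1 h2 a b ha hb hab).2
    have hn : ‖x - (a • y₁ + b • y₂)‖ ≤ a * ‖x - y₁‖ + b * ‖x - y₂‖ := by
      have e : x - (a • y₁ + b • y₂) = a • (x - y₁) + b • (x - y₂) := by
        have : x = (a + b) • x := by rw [hab, one_smul]
        nth_rewrite 1 [this]
        module
      rw [e]
      refine (norm_add_le _ _).trans ?_
      rw [norm_smul, norm_smul, Real.norm_of_nonneg ha, Real.norm_of_nonneg hb]
    have hq : ‖x - (a • y₁ + b • y₂)‖ ^ 2 ≤ a * ‖x - y₁‖ ^ 2 + b * ‖x - y₂‖ ^ 2 := by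
      refine (pow_le_pow_left₀ (norm_nonneg _) hn 2).trans ?_
      have hb' : b = 1 - a := by linarith
      subst hb'
      nlinarith [mul_nonneg (mul_nonneg ha hb) (sq_nonneg (‖x - y₁‖ - ‖x - y₂‖))]
    have hq' := div_le_div_of_nonneg_right hq (by positivity : 0 ≤ 2 * t)
    simp only [smul_eq_mul]
    have e : (a * ‖x - y₁‖ ^ 2 + b * ‖x - y₂‖ ^ 2) / (2 * t) =
      a * (‖x - y₁‖ ^ 2 / (2 * t)) + b * (‖x - y₂‖ ^ 2 / (2 * t)) := by ring
    linarith
  set S : EReal := ⨅ y : EuclideanSpace ℝ (Fin n),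
        (((‖x - y‖ ^ 2 / (2 * t) : ℝ)) : EReal) + J y with hSdef
  have hg : ∀ y, J y ≠ ⊤ → (((‖x - y‖ ^ 2 / (2 * t) : ℝ)) : EReal) + J y =
      ((‖x - y‖ ^ 2 / (2 * t) + (J y).toReal : ℝ) : EReal) := by
    intro y hy
    rw [EReal.coe_add, ← hco y hy]
  have hSle : ∀ y, J y ≠ ⊤ → S ≤ ((‖x - y‖ ^ 2 / (2 * t) + (J y).toReal : ℝ) : EReal) := by
    intro y hy
    rw [← hg y hy]
    exact iInf_le _ y
  have hS0 : 0 ≤ S := le_iInf fun y =>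
    add_nonneg (EReal.coe_nonneg.2 (by positivity)) (hJ0 y)
  obtain ⟨y₀, hy₀⟩ := hJ_int
  have hST : S ≠ ⊤ := ((hSle y₀ (interior_subset hy₀)).trans_lt (EReal.coe_lt_top _)).ne
  have hSB : S ≠ ⊥ := (lt_of_lt_of_le EReal.bot_lt_zero hS0).ne'
  have hSm : S = (S.toReal : EReal) := (EReal.coe_toReal hST hSB).symm
  rw [hSm]
  refine (continuous_coe_real_ereal.tendsto _).comp
    (visc_real n J hJ_lsc hj ⟨y₀, hy₀⟩ x t S.toReal ht hF ?_ ?_)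
  · intro y hy
    have := hSle y hy
    rw [hSm] at this
    exact EReal.coe_le_coe_iff.1 this
  · intro c hc
    have hlt : S < (c : EReal) := by
      rw [hSm]
      exact EReal.coe_lt_coe_iff.2 hc
    obtain ⟨y, hy⟩ := iInf_lt_iff.1 hlt
    have hyT : J y ≠ ⊤ := fun h => by
      rw [h, EReal.coe_add_top] at hy
      exact absurd hy (not_lt.2 le_top)
    refine ⟨y, hyT, ?_⟩
    rw [hg y hyT] at hy
    exact EReal.coe_lt_coe_iff.1 hy
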